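/- Let Γ be a finite extensive-form game with perfect recall. If (β*, μ*) is a subgame perfect semi-sequential equilibrium, then β* is a subgame perfect equilibrium in behavioral strategies. -/

import Mathlib

open scoped Classical

noncomputable section

/-- A finite extensive-form game.  Actions are labelled by natural numbers drawn from the
finite pool `actFinset`; a history is the list of actions taken so far; players are `Fin n`
and `P h = none` means that the chance player moves after `h`.  The information sets of
player `i` are `Info i j` for `j < m i`, and `infoIdx h` is the index of the information
set containing a nonterminal history `h` at which some player moves.  Payoffs `u i h` are
relevant on terminal histories. -/
structure EFG where
  n : ℕ
  actFinset : Finset ℕ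
  H : Finset (List ℕ)
  P : List ℕ → Option (Fin n)
  fc : List ℕ → ℕ → ℝ
  m : Fin n → ℕ
  Info : Fin n → ℕ → Finset (List ℕ)
  infoIdx : List ℕ → ℕ
  u : Fin n → List ℕ → ℝ
  empty_mem : ([] : List ℕ) ∈ H
  prefixClosed : ∀ h ∈ H, ∀ h' : List ℕ, h' <+: h → h' ∈ H
  act_mem : ∀ (h : List ℕ) (a : ℕ), h ++ [a] ∈ H → a ∈ actFinset
  fc_nonneg : ∀ h a, 0 ≤ fc h a
  fc_sum : ∀ h ∈ H, P h = none → (∃ a, h ++ [a] ∈ H) →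
    ∑ a ∈ actFinset.filter (fun a => h ++ [a] ∈ H), fc h a = 1
  info_spec : ∀ (i : Fin n) (j : ℕ) (h : List ℕ), j < m i →
    (h ∈ Info i j ↔ h ∈ H ∧ P h = some i ∧ (∃ a, h ++ [a] ∈ H) ∧ infoIdx h = j)
  infoIdx_lt : ∀ (i : Fin n), ∀ h ∈ H, P h = some i → (∃ a, h ++ [a] ∈ H) → infoIdx h < m i
  info_nonempty : ∀ (i : Fin n) (j : ℕ), j < m i → (Info i j).Nonempty
  info_actions : ∀ (i : Fin n) (j : ℕ), j < m i → ∀ h ∈ Info i j, ∀ h' ∈ Info i j,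
    ∀ a : ℕ, (h ++ [a] ∈ H ↔ h' ++ [a] ∈ H)
  act_unique : ∀ (h h' : List ℕ) (a : ℕ), h ∈ H → h' ∈ H → h ++ [a] ∈ H → h' ++ [a] ∈ H →
    P h = P h' ∧ infoIdx h = infoIdx h'

namespace EFG

/-- Behavioral strategy profiles (player, information-set index, action ↦ probability). -/
abbrev Profile (G : EFG) : Type := Fin G.n → ℕ → ℕ → ℝ

/-- Belief systems (player, information-set index, history ↦ probability). -/
abbrev Belief (G : EFG) : Type := Fin G.n → ℕ → List ℕ → ℝ

variable (G : EFG)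

/-- The set `Z` of terminal histories. -/
def Zset : Finset (List ℕ) := G.H.filter fun h => ∀ a : ℕ, h ++ [a] ∉ G.H

/-- The set `A(h)` of actions available after a history. -/
def A (h : List ℕ) : Finset ℕ := G.actFinset.filter fun a => h ++ [a] ∈ G.H

/-- The common action set `A(I_i^j)` of an information set. -/
def infoA (i : Fin G.n) (j : ℕ) : Finset ℕ := (G.Info i j).sup fun h => G.A h

/-- A behavioral strategy of player `i`: a probability distribution on `A(I_i^j)` for
each information set `I_i^j`. -/
def IsBehStrategy (i : Fin G.n) (b : ℕ → ℕ → ℝ) : Prop :=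
  ∀ j < G.m i, (∀ a ∈ G.infoA i j, 0 ≤ b j a) ∧ ∑ a ∈ G.infoA i j, b j a = 1

/-- A behavioral strategy profile. -/
def IsBehProfile (β : G.Profile) : Prop := ∀ i : Fin G.n, G.IsBehStrategy i (β i)

/-- The probability of action `a` at history `h`: the chance distribution if the chance
player moves, and the mover's behavioral strategy otherwise. -/
def moveProb (β : G.Profile) (h : List ℕ) (a : ℕ) : ℝ :=
  (G.P h).elim (G.fc h a) fun i => β i (G.infoIdx h) a

/-- Player `i`'s record `X_i` of the information sets he encounters along a history and the
actions he takes at them, accumulated starting from the prefix `pre`. -/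
def recordFrom (i : Fin G.n) : List ℕ → List ℕ → List (ℕ × ℕ)
  | _, [] => []
  | pre, b :: rest =>
    (if G.P pre = some i then [(G.infoIdx pre, b)] else []) ++ recordFrom i (pre ++ [b]) rest

/-- Perfect recall. -/
def PerfectRecall : Prop :=
  ∀ (i : Fin G.n) (j : ℕ), j < G.m i →
    ∀ h ∈ G.Info i j, ∀ h' ∈ G.Info i j, G.recordFrom i [] h = G.recordFrom i [] h'

/-- Product of the move probabilities along `rest`, continuing from the prefix `pre`. -/
def prodAlong (β : G.Profile) : List ℕ → List ℕ → ℝ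
  | _, [] => 1
  | pre, b :: rest => G.moveProb β pre b * prodAlong β (pre ++ [b]) rest

/-- `ω(h|β)`: the probability that the moves along `h` are played under `β`. -/
def omega (β : G.Profile) (h : List ℕ) : ℝ := G.prodAlong β [] h

/-- `ω(I_i^j|β)`. -/
def omegaInfo (i : Fin G.n) (j : ℕ) (β : G.Profile) : ℝ := ∑ h ∈ G.Info i j, G.omega β h

/-- Product of the move probabilities along `rest` from `pre`, disregarding player `i`'s
own moves. -/
def prodAlongNot (i : Fin G.n) (β : G.Profile) : List ℕ → List ℕ → ℝ
  | _, [] => 1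
  | pre, b :: rest =>
    (if G.P pre = some i then 1 else G.moveProb β pre b) * prodAlongNot i β (pre ++ [b]) rest

/-- `S^i(h|β)`: probability of the moves along `h`, disregarding player `i`'s own moves. -/
def Sh (i : Fin G.n) (β : G.Profile) (h : List ℕ) : ℝ := G.prodAlongNot i β [] h

/-- `S^i(I_i^j|β)`. -/
def SInfo (i : Fin G.n) (j : ℕ) (β : G.Profile) : ℝ := ∑ h ∈ G.Info i j, G.Sh i β h

/-- Product of the move probabilities along `rest` from `pre`, with the factor at prefixes
lying in `I_i^j` omitted. -/
def prodAlongSkip (i : Fin G.n) (j : ℕ) (β : G.Profile) : List ℕ → List ℕ → ℝ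
  | _, [] => 1
  | pre, b :: rest =>
    (if pre ∈ G.Info i j then 1 else G.moveProb β pre b) * prodAlongSkip i j β (pre ++ [b]) rest

/-- `q ∈ M(a, I_i^j)`: `I_i^q` is a first information set of player `i` after action `a`
(every history in `I_i^q` contains `a`, with no later action of `a` lying in any action set
of player `i`). -/
def FirstAfter (i : Fin G.n) (a : ℕ) (q : ℕ) : Prop :=
  q < G.m i ∧ ∀ h ∈ G.Info i q, ∃ l₁ l₂ : List ℕ,
    h = l₁ ++ a :: l₂ ∧ ∀ b ∈ l₂, ∀ p < G.m i, b ∉ G.infoA i p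

/-- `q ∈ M(I_i^j) = ∪_{a ∈ A(I_i^j)} M(a, I_i^j)`. -/
def MInfo (i : Fin G.n) (j : ℕ) (q : ℕ) : Prop := ∃ a ∈ G.infoA i j, G.FirstAfter i a q

/-- `q ∈ Λ(a, I_i^j)`: every history in `I_i^q` contains the action `a`. -/
def LambdaSet (i : Fin G.n) (a : ℕ) (q : ℕ) : Prop :=
  q < G.m i ∧ ∀ h ∈ G.Info i q, ∃ l₁ l₂ : List ℕ, h = l₁ ++ a :: l₂

/-- `ϱ^i_{I_i^j}(β, β̃)`: replace player `i`'s component of `β` by that of `β̃` at every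
information set `I_i^q` such that some history in `I_i^q` contains an action of `A(I_i^j)`. -/
def rho (i : Fin G.n) (j : ℕ) (β βt : G.Profile) : G.Profile := fun p q =>
  if p = i ∧ ∃ h ∈ G.Info i q, ∃ b ∈ h, b ∈ G.infoA i j then βt i q else β p q

/-- A belief system: a probability distribution on each information set. -/
def IsBelief (μ : G.Belief) : Prop :=
  ∀ (i : Fin G.n) (j : ℕ), j < G.m i →
    (∀ h ∈ G.Info i j, 0 ≤ μ i j h) ∧ ∑ h ∈ G.Info i j, μ i j h = 1

/-- A self-independent belief system for `β`:
`S^i(I_i^j|β) · μ^i_{I_i^j}(h) = S^i(h|β)`. -/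
def SelfIndep (β : G.Profile) (μ : G.Belief) : Prop :=
  ∀ (i : Fin G.n) (j : ℕ), j < G.m i → ∀ h ∈ G.Info i j,
    G.SInfo i j β * μ i j h = G.Sh i β h

/-- Auxiliary for `ν`: scan `rest` from `pre` for the subhistory lying in `I_i^j`, then
weight by the belief and multiply the move probabilities of the remaining moves (the move
taken at the subhistory itself being skipped). -/
def nuAux (i : Fin G.n) (j : ℕ) (β : G.Profile) (w : List ℕ → ℝ) : List ℕ → List ℕ → ℝ
  | _, [] => 0
  | pre, b :: rest =>
    if pre ∈ G.Info i j then w pre * G.prodAlong β (pre ++ [b]) rest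
    else nuAux i j β w (pre ++ [b]) rest

/-- `ν^i_{I_i^j}(h | a, β^{-I_i^j}, μ)` (it does not involve the component of `β` at
`I_i^j`). -/
def nu (i : Fin G.n) (j : ℕ) (β : G.Profile) (μ : G.Belief) (h : List ℕ) : ℝ :=
  G.nuAux i j β (μ i j) [] h

/-- `u^i((a, β^{-I_i^j}) ∧ I_i^j)`. -/
def uWedgeAct (i : Fin G.n) (j : ℕ) (a : ℕ) (β : G.Profile) : ℝ :=
  ∑ h ∈ G.Zset.filter (fun h => a ∈ h), G.u i h * G.prodAlongSkip i j β [] h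

/-- `u^i(β ∧ I_i^j)`. -/
def uWedge (i : Fin G.n) (j : ℕ) (β : G.Profile) : ℝ :=
  ∑ h ∈ G.Zset.filter (fun h => ∃ b ∈ h, b ∈ G.infoA i j), G.u i h * G.omega β h

/-- The conditional expected payoff `u^i(a, β^{-I_i^j}, μ | I_i^j)`. -/
def uCond (i : Fin G.n) (j : ℕ) (a : ℕ) (β : G.Profile) (μ : G.Belief) : ℝ :=
  ∑ h ∈ G.Zset.filter (fun h => a ∈ h), G.u i h * G.nu i j β μ h

/-- The expected payoff `u^i(β)`. -/
def uExp (i : Fin G.n) (β : G.Profile) : ℝ := ∑ h ∈ G.Zset, G.u i h * G.omega β h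

/-- The profile obtained from `β` by replacing all of player `i`'s components by `b`. -/
def replace (β : G.Profile) (i : Fin G.n) (b : ℕ → ℕ → ℝ) : G.Profile :=
  fun p => if p = i then b else β p

/-- `β` is a Nash equilibrium in behavioral strategies. -/
def IsNash (β : G.Profile) : Prop :=
  G.IsBehProfile β ∧ ∀ (i : Fin G.n) (b : ℕ → ℕ → ℝ), G.IsBehStrategy i b →
    G.uExp i (G.replace β i b) ≤ G.uExp i β

/-- `(β, β̃, μ)` satisfies the Nash characterization (Definition 2 of the paper). -/
def NashChar (β βt : G.Profile) (μ : G.Belief) : Prop :=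
  (∀ (i : Fin G.n) (j : ℕ), j < G.m i → ∀ a' ∈ G.infoA i j, ∀ a'' ∈ G.infoA i j,
    G.uWedgeAct i j a' (G.rho i j β βt) < G.uWedgeAct i j a'' (G.rho i j β βt) →
    β i j a' = 0) ∧
  (∀ (i : Fin G.n) (j : ℕ), j < G.m i → ∀ a' ∈ G.infoA i j, ∀ a'' ∈ G.infoA i j,
    G.uCond i j a' (G.rho i j β βt) μ < G.uCond i j a'' (G.rho i j β βt) μ →
    βt i j a' = 0) ∧
  G.IsBelief μ ∧ G.SelfIndep β μ

/-- `r` is the root of a subgame: every information set lies entirely inside or entirely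
outside the set of histories extending `r`. -/
def IsSubgameRoot (r : List ℕ) : Prop :=
  r ∈ G.H ∧ ∀ (i : Fin G.n) (j : ℕ), j < G.m i →
    (∀ h ∈ G.Info i j, r <+: h) ∨ ∀ h ∈ G.Info i j, ¬ r <+: h

/-- The depth `g` of the smallest subgame containing `A(I_i^j)` (the length of the longest
subgame root preceding every history of `I_i^j`). -/
def sgDepthInfo (i : Fin G.n) (j : ℕ) : ℕ :=
  (G.H.filter fun r => G.IsSubgameRoot r ∧ ∀ h ∈ G.Info i j, r <+: h).sup List.length

/-- The depth `q(h)` of the smallest subgame containing the last action of `h`. -/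
def sgDepthHist (h : List ℕ) : ℕ :=
  (G.H.filter fun r => G.IsSubgameRoot r ∧ r <+: h.dropLast).sup List.length

/-- `C^i_{I_i^j}(h|β)`: product of move probabilities along `h` within the smallest subgame
containing `A(I_i^j)`. -/
def Ch (i : Fin G.n) (j : ℕ) (β : G.Profile) (h : List ℕ) : ℝ :=
  G.prodAlong β (h.take (G.sgDepthInfo i j)) (h.drop (G.sgDepthInfo i j))

/-- `C^i_{I_i^j}(I_i^j|β)`. -/
def CInfo (i : Fin G.n) (j : ℕ) (β : G.Profile) : ℝ := ∑ h ∈ G.Info i j, G.Ch i j β h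

/-- `u^i((a, β^{-I_i^j}) ⋄ I_i^j)`. -/
def uDiamondAct (i : Fin G.n) (j : ℕ) (a : ℕ) (β : G.Profile) : ℝ :=
  ∑ h ∈ G.Zset.filter (fun h => a ∈ h), G.u i h *
    G.prodAlongSkip i j β (h.take (G.sgDepthInfo i j)) (h.drop (G.sgDepthInfo i j))

/-- `Y^i(h|β)`: like `S^i(h|β)` but within the smallest subgame containing the last action
of `h`. -/
def Yh (i : Fin G.n) (β : G.Profile) (h : List ℕ) : ℝ :=
  G.prodAlongNot i β (h.take (G.sgDepthHist h)) (h.drop (G.sgDepthHist h))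

/-- `Y^i(I_i^j|β)`. -/
def YInfo (i : Fin G.n) (j : ℕ) (β : G.Profile) : ℝ := ∑ h ∈ G.Info i j, G.Yh i β h

/-- The belief condition `Y^i(I_i^j|β) · μ^i_{I_i^j}(h) = Y^i(h|β)`. -/
def YConsistent (β : G.Profile) (μ : G.Belief) : Prop :=
  ∀ (i : Fin G.n) (j : ℕ), j < G.m i → ∀ h ∈ G.Info i j,
    G.YInfo i j β * μ i j h = G.Yh i β h

/-- The expected payoff of player `i` in the subgame rooted at `r` (payoffs of terminal
histories extending `r`, weighted by the move probabilities within the subgame). -/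
def uExpFrom (i : Fin G.n) (β : G.Profile) (r : List ℕ) : ℝ :=
  ∑ h ∈ G.Zset.filter (fun h => r <+: h), G.u i h * G.prodAlong β r (h.drop r.length)

/-- `β` is a subgame perfect equilibrium in behavioral strategies: its restriction to every
subgame is a Nash equilibrium in behavioral strategies of that subgame. -/
def IsSubgamePerfect (β : G.Profile) : Prop :=
  G.IsBehProfile β ∧ ∀ r : List ℕ, G.IsSubgameRoot r →
    ∀ (i : Fin G.n) (b : ℕ → ℕ → ℝ), G.IsBehStrategy i b →
      G.uExpFrom i (G.replace β i b) r ≤ G.uExpFrom i β r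

/-- `(β, β̃, μ)` satisfies the subgame perfect characterization (Definition 6 of the
paper). -/
def SubgameChar (β βt : G.Profile) (μ : G.Belief) : Prop :=
  (∀ (i : Fin G.n) (j : ℕ), j < G.m i → ∀ a' ∈ G.infoA i j, ∀ a'' ∈ G.infoA i j,
    G.uDiamondAct i j a' (G.rho i j β βt) < G.uDiamondAct i j a'' (G.rho i j β βt) →
    β i j a' = 0) ∧
  (∀ (i : Fin G.n) (j : ℕ), j < G.m i → ∀ a' ∈ G.infoA i j, ∀ a'' ∈ G.infoA i j,
    G.uCond i j a' (G.rho i j β βt) μ < G.uCond i j a'' (G.rho i j β βt) μ →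
    βt i j a' = 0) ∧
  G.IsBelief μ ∧ G.YConsistent β μ

/-- `(β, μ)` is a semi-sequential equilibrium. -/
def SemiSeqEq (β : G.Profile) (μ : G.Belief) : Prop :=
  G.IsBehProfile β ∧ G.IsBelief μ ∧ G.SelfIndep β μ ∧
  ∀ (i : Fin G.n) (j : ℕ), j < G.m i → ∀ a' ∈ G.infoA i j, ∀ a'' ∈ G.infoA i j,
    G.uCond i j a' β μ < G.uCond i j a'' β μ → β i j a' = 0

/-- `(β, μ)` is a subgame perfect semi-sequential equilibrium. -/
def SubgameSemiSeqEq (β : G.Profile) (μ : G.Belief) : Prop :=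
  G.IsBehProfile β ∧ G.IsBelief μ ∧ G.YConsistent β μ ∧
  ∀ (i : Fin G.n) (j : ℕ), j < G.m i → ∀ a' ∈ G.infoA i j, ∀ a'' ∈ G.infoA i j,
    G.uCond i j a' β μ < G.uCond i j a'' β μ → β i j a' = 0

/-- `d(I_i^j)`: the number of information sets of player `i` containing a prefix of some
history of `I_i^j` (counting `I_i^j` itself). -/
def dInfo (i : Fin G.n) (j : ℕ) : ℕ :=
  ((Finset.range (G.m i)).filter
    (fun q => ∃ h ∈ G.Info i j, ∃ p : List ℕ, p <+: h ∧ p ∈ G.Info i q)).card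

end EFG

/-!
The gain of a unilateral deviation in a subgame decomposes along the game tree: it is the sum over
the histories `h` of the subgame of the probability that the deviating profile reaches `h` times
the gain, in terms of the original continuation payoffs, of the deviating move at `h`. Only the
histories at which the deviating player `i` moves contribute, and because a subgame never cuts an
information set these can be grouped by the information sets of `i`. By perfect recall the histories
of one information set carry the same own moves of `i`, so the probabilities of reaching them from
the root of the subgame remain proportional to the beliefs after the deviation. Hence each group is
a nonnegative multiple of the gain in conditional expected payoff, which is nonpositive because the
equilibrium strategy only uses actions that maximize this payoff.
-/

theorem sum_mul_le_sum_mul_of_support_argmax {ι R : Type*} [Ring R] [LinearOrder R]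
    [IsOrderedRing R] {s : Finset ι} {p q U : ι → R} (hq : ∀ a ∈ s, 0 ≤ q a)
    (hp_sum : ∑ a ∈ s, p a = 1) (hq_sum : ∑ a ∈ s, q a = 1)
    (hp_argmax : ∀ a ∈ s, ∀ a' ∈ s, U a < U a' → p a = 0) :
    ∑ a ∈ s, q a * U a ≤ ∑ a ∈ s, p a * U a := by
  obtain rfl | hs := s.eq_empty_or_nonempty
  · simp
  obtain ⟨m, hm, hmax⟩ := s.exists_max_image U hs
  calc ∑ a ∈ s, q a * U a
      ≤ ∑ a ∈ s, q a * U m :=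
        Finset.sum_le_sum fun a ha => mul_le_mul_of_nonneg_left (hmax a ha) (hq a ha)
    _ = ∑ a ∈ s, p a * U m := by rw [← Finset.sum_mul, ← Finset.sum_mul, hp_sum, hq_sum]
    _ = ∑ a ∈ s, p a * U a := Finset.sum_congr rfl fun a ha => by
        rcases (hmax a ha).lt_or_eq with h | h
        · simp only [hp_argmax a ha m hm h, zero_mul]
        · rw [h]

namespace EFG

variable {G : EFG} {i : Fin G.n} {j : ℕ} {β σ : G.Profile} {μ : G.Belief} {b : ℕ → ℕ → ℝ}
  {r s h h' z : List ℕ} {a : ℕ}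

section Tree

theorem mem_A : a ∈ G.A h ↔ h ++ [a] ∈ G.H := by
  simpa [A] using G.act_mem h a

theorem mem_H_of_append_mem_H {t : List ℕ} (ht : h ++ t ∈ G.H) : h ∈ G.H :=
  G.prefixClosed _ ht _ (List.prefix_append h t)

@[elab_as_elim]
theorem backward_induction {motive : List ℕ → Prop}
    (step : ∀ h ∈ G.H, (∀ a ∈ G.A h, motive (h ++ [a])) → motive h) (h : List ℕ) (hh : h ∈ G.H) :
    motive h := by
  induction hk : G.H.sup List.length - h.length using Nat.strong_induction_on generalizing h with
  | _ k ih =>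
    refine step h hh fun a ha => ih _ ?_ _ (mem_A.1 ha) rfl
    have hlen : (h ++ [a]).length ≤ G.H.sup List.length :=
      Finset.le_sup (f := List.length) (mem_A.1 ha)
    rw [List.length_append, List.length_singleton] at hlen ⊢
    omega

theorem sum_filter_prefix_eq_add_sum {M : Type*} [AddCommMonoid M] (φ : List ℕ → M)
    (hh : h ∈ G.H) :
    ∑ z ∈ G.H.filter (fun z => h <+: z), φ z =
      φ h + ∑ a ∈ G.A h, ∑ z ∈ G.H.filter (fun z => h ++ [a] <+: z), φ z := by
  have subtree_eq : G.H.filter (fun z => h <+: z) =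
      insert h ((G.A h).biUnion fun a => G.H.filter (fun z => h ++ [a] <+: z)) := by
    ext z
    simp only [Finset.mem_filter, Finset.mem_insert, Finset.mem_biUnion, mem_A]
    constructor
    · rintro ⟨hz, _ | ⟨a, t⟩, rfl⟩
      · exact .inl (List.append_nil h)
      · have hza : h ++ [a] ++ t ∈ G.H := List.append_cons h a t ▸ hz
        exact .inr ⟨a, mem_H_of_append_mem_H hza, hz, t, by simp⟩
    · rintro (rfl | ⟨a, -, hz, hp⟩)
      · exact ⟨hh, List.prefix_rfl⟩
      · exact ⟨hz, (List.prefix_append h [a]).trans hp⟩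
  rw [subtree_eq, Finset.sum_insert, Finset.sum_biUnion]
  · intro a _ a' _ hne
    refine Finset.disjoint_filter.2 ?_
    rintro _ - ⟨t, rfl⟩ hp
    simp only [List.append_assoc, List.prefix_append_right_inj, List.singleton_append,
      List.cons_prefix_cons] at hp
    exact hne hp.1.symm
  · simp only [Finset.mem_biUnion, Finset.mem_filter, not_exists, not_and]
    intro a _ _ hp
    simpa using hp.length_le

end Tree

section Reach

/-- The probability of reaching `h` from its prefix `r` when `σ` is played. -/
def reachProb (σ : G.Profile) (r h : List ℕ) : ℝ := G.prodAlong σ r (h.drop r.length)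

/-- The probability of reaching `h` from its prefix `r` when player `i` steers towards `h` and all
others play `β`; the paper's `Y^i(h|β)` is the case where `r` is the root of the smallest subgame
containing the last action of `h`. -/
def counterfactualReach (i : Fin G.n) (β : G.Profile) (r h : List ℕ) : ℝ :=
  G.prodAlongNot i β r (h.drop r.length)

theorem prodAlongNot_append (pre t t' : List ℕ) :
    G.prodAlongNot i β pre (t ++ t') =
      G.prodAlongNot i β pre t * G.prodAlongNot i β (pre ++ t) t' := by
  induction t generalizing pre with
  | nil => simp [prodAlongNot]
  | cons a t ih => simp [prodAlongNot, ih, mul_assoc]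

theorem recordFrom_append (pre t t' : List ℕ) :
    G.recordFrom i pre (t ++ t') = G.recordFrom i pre t ++ G.recordFrom i (pre ++ t) t' := by
  induction t generalizing pre with
  | nil => simp [recordFrom]
  | cons a t ih => simp [recordFrom, ih]

theorem reachProb_self : reachProb σ h h = 1 := by
  simp [reachProb, prodAlong]

theorem reachProb_step (hz : h ++ [a] <+: z) :
    reachProb σ h z = G.moveProb σ h a * reachProb σ (h ++ [a]) z := by
  obtain ⟨t, rfl⟩ := hz
  simp [reachProb, prodAlong]

theorem counterfactualReach_trans (hrs : r <+: s) (hsh : s <+: h) :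
    counterfactualReach i β r h = counterfactualReach i β r s * counterfactualReach i β s h := by
  obtain ⟨t, rfl⟩ := hrs
  obtain ⟨t', rfl⟩ := hsh
  simp only [counterfactualReach, List.drop_left, List.append_assoc, prodAlongNot_append]
  rw [← List.append_assoc, List.drop_left]

end Reach

section Payoff

/-- The expected total of the rewards `g` collected at the histories visited from `r` onwards when
`σ` is played. -/
def expectedTotal (σ : G.Profile) (g : List ℕ → ℝ) (r : List ℕ) : ℝ :=
  ∑ z ∈ G.H.filter (fun z => r <+: z), reachProb σ r z * g z

/-- Player `i`'s gain from a single move according to `σ` at `h` when `β` is played everywhere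
else. -/
def stepGain (i : Fin G.n) (σ β : G.Profile) (h : List ℕ) : ℝ :=
  ∑ a ∈ G.A h, (G.moveProb σ h a - G.moveProb β h a) * G.uExpFrom i β (h ++ [a])

theorem expectedTotal_eq_add_sum (g : List ℕ → ℝ) (hh : h ∈ G.H) :
    expectedTotal σ g h = g h + ∑ a ∈ G.A h, G.moveProb σ h a * expectedTotal σ g (h ++ [a]) := by
  rw [expectedTotal, sum_filter_prefix_eq_add_sum _ hh, reachProb_self, one_mul]
  congr 1
  refine Finset.sum_congr rfl fun a _ => ?_
  rw [expectedTotal, Finset.mul_sum]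
  refine Finset.sum_congr rfl fun z hz => ?_
  rw [reachProb_step (Finset.mem_filter.1 hz).2, mul_assoc]

theorem uExpFrom_eq_expectedTotal :
    G.uExpFrom i β h = expectedTotal β (fun z => if z ∈ G.Zset then G.u i z else 0) h := by
  simp only [expectedTotal, mul_ite, mul_zero]
  rw [← Finset.sum_filter, Finset.filter_filter]
  refine Finset.sum_congr ?_ fun z _ => mul_comm _ _
  ext z
  simp only [Zset, Finset.mem_filter]
  tauto

theorem uExpFrom_eq_add_sum (hh : h ∈ G.H) :
    G.uExpFrom i β h = (if h ∈ G.Zset then G.u i h else 0) +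
      ∑ a ∈ G.A h, G.moveProb β h a * G.uExpFrom i β (h ++ [a]) := by
  simpa only [uExpFrom_eq_expectedTotal] using expectedTotal_eq_add_sum _ hh

theorem uExpFrom_sub_eq_expectedTotal_stepGain (hr : r ∈ G.H) :
    G.uExpFrom i σ r - G.uExpFrom i β r = expectedTotal σ (stepGain i σ β) r := by
  refine backward_induction (fun h hh ih => ?_) r hr
  rw [expectedTotal_eq_add_sum _ hh, uExpFrom_eq_add_sum hh, uExpFrom_eq_add_sum hh,
    add_sub_add_left_eq_sub, stepGain, ← Finset.sum_sub_distrib, ← Finset.sum_add_distrib]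
  refine Finset.sum_congr rfl fun a ha => ?_
  rw [← ih a ha]
  ring

end Payoff

section InformationSets

theorem infoA_eq_A (hj : j < G.m i) (hh : h ∈ G.Info i j) : G.infoA i j = G.A h := by
  ext a
  simp only [infoA, Finset.mem_sup, mem_A]
  exact ⟨fun ⟨h', hh', ha⟩ => (G.info_actions i j hj h' hh' h hh a).1 ha, fun ha => ⟨h, hh, ha⟩⟩

theorem mem_info_of_P_eq (hP : G.P h = some i) (ha : h ++ [a] ∈ G.H) :
    G.infoIdx h < G.m i ∧ h ∈ G.Info i (G.infoIdx h) :=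
  have hh : h ∈ G.H := mem_H_of_append_mem_H ha
  have hj : G.infoIdx h < G.m i := G.infoIdx_lt i h hh hP ⟨a, ha⟩
  ⟨hj, (G.info_spec i _ h hj).2 ⟨hh, hP, ⟨a, ha⟩, rfl⟩⟩

theorem mem_info_of_mem_infoA (hj : j < G.m i) (ha : a ∈ G.infoA i j) (hha : h ++ [a] ∈ G.H) :
    h ∈ G.Info i j := by
  obtain ⟨h', hh'⟩ := G.info_nonempty i j hj
  obtain ⟨hH', hP', -, hidx'⟩ := (G.info_spec i j h' hj).1 hh'
  rw [infoA_eq_A hj hh', mem_A] at ha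
  have hH : h ∈ G.H := mem_H_of_append_mem_H hha
  obtain ⟨hP, hidx⟩ := G.act_unique h h' a hH hH' hha ha
  exact (G.info_spec i j h hj).2 ⟨hH, hP.trans hP', ⟨a, hha⟩, hidx.trans hidx'⟩

theorem IsSubgameRoot.sum_filter_prefix_eq_sum_info {M : Type*} [AddCommMonoid M]
    (hr : G.IsSubgameRoot r) {φ : List ℕ → M}
    (hφ : ∀ h, φ h ≠ 0 → G.P h = some i ∧ ∃ a, h ++ [a] ∈ G.H) :
    ∑ z ∈ G.H.filter (fun z => r <+: z), φ z =
      ∑ j ∈ Finset.range (G.m i) with ∀ h ∈ G.Info i j, r <+: h, ∑ h ∈ G.Info i j, φ h := by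
  rw [← Finset.sum_biUnion]
  · symm
    refine Finset.sum_subset (fun z hz => ?_) fun z hz hz' => ?_
    · simp only [Finset.mem_biUnion, Finset.mem_filter, Finset.mem_range] at hz ⊢
      obtain ⟨j, ⟨hj, hin⟩, hzj⟩ := hz
      exact ⟨((G.info_spec i j z hj).1 hzj).1, hin z hzj⟩
    · by_contra hφz
      obtain ⟨hP, a, ha⟩ := hφ z hφz
      obtain ⟨hj, hzj⟩ := mem_info_of_P_eq hP ha
      have hin := (hr.2 i _ hj).resolve_right fun hout => hout z hzj (Finset.mem_filter.1 hz).2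
      exact hz' (Finset.mem_biUnion.2
        ⟨_, Finset.mem_filter.2 ⟨Finset.mem_range.2 hj, hin⟩, hzj⟩)
  · intro j hj j' hj' hne
    simp only [Finset.coe_filter, Finset.mem_range, Set.mem_ofPred_eq] at hj hj'
    refine Finset.disjoint_left.2 fun z hz hz' => hne ?_
    exact ((G.info_spec i j z hj.1).1 hz).2.2.2.symm.trans
      ((G.info_spec i j' z hj'.1).1 hz').2.2.2

end InformationSets

section Deviation

theorem moveProb_of_P_eq (hP : G.P h = some i) :
    G.moveProb σ h a = σ i (G.infoIdx h) a := by
  rw [moveProb, hP, Option.elim_some]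

theorem moveProb_of_P_eq_none (hP : G.P h = none) : G.moveProb σ h a = G.fc h a := by
  rw [moveProb, hP, Option.elim_none]

theorem moveProb_nonneg (hσ : G.IsBehProfile σ) (ha : h ++ [a] ∈ G.H) :
    0 ≤ G.moveProb σ h a := by
  cases hP : G.P h with
  | none =>
    rw [moveProb_of_P_eq_none hP]
    exact G.fc_nonneg h a
  | some p =>
    obtain ⟨hj, hh⟩ := mem_info_of_P_eq hP ha
    have ha' : a ∈ G.infoA p (G.infoIdx h) := by rwa [infoA_eq_A hj hh, mem_A]
    rw [moveProb_of_P_eq hP]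
    exact (hσ p _ hj).1 a ha'

theorem prodAlong_nonneg (hσ : G.IsBehProfile σ) {t : List ℕ} (ht : h ++ t ∈ G.H) :
    0 ≤ G.prodAlong σ h t := by
  induction t generalizing h with
  | nil => exact zero_le_one
  | cons a t ih =>
    rw [List.append_cons] at ht
    exact mul_nonneg (moveProb_nonneg hσ (mem_H_of_append_mem_H ht)) (ih ht)

theorem reachProb_nonneg (hσ : G.IsBehProfile σ) (hrh : r <+: h) (hh : h ∈ G.H) :
    0 ≤ reachProb σ r h := by
  obtain ⟨t, rfl⟩ := hrh
  rw [reachProb, List.drop_left]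
  exact prodAlong_nonneg hσ hh

theorem IsBehProfile.replace (hβ : G.IsBehProfile β) (hb : G.IsBehStrategy i b) :
    G.IsBehProfile (G.replace β i b) := by
  intro p
  obtain rfl | hp := eq_or_ne p i
  · simpa only [EFG.replace, if_true] using hb
  · simpa only [EFG.replace, if_neg hp] using hβ p

theorem moveProb_replace_of_eq (hP : G.P h = some i) :
    G.moveProb (G.replace β i b) h a = b (G.infoIdx h) a := by
  rw [moveProb_of_P_eq hP, replace, if_pos rfl]

theorem moveProb_replace_of_ne (hP : G.P h ≠ some i) :
    G.moveProb (G.replace β i b) h a = G.moveProb β h a := by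
  cases hp : G.P h with
  | none => rw [moveProb_of_P_eq_none hp, moveProb_of_P_eq_none hp]
  | some p =>
    have hpi : p ≠ i := fun e => hP (hp.trans (congrArg some e))
    rw [moveProb_of_P_eq hp, moveProb_of_P_eq hp, replace, if_neg hpi]

theorem stepGain_replace_of_mem_info (hj : j < G.m i) (hh : h ∈ G.Info i j) :
    stepGain i (G.replace β i b) β h =
      ∑ a ∈ G.infoA i j, (b j a - β i j a) * G.uExpFrom i β (h ++ [a]) := by
  obtain ⟨-, hP, -, hidx⟩ := (G.info_spec i j h hj).1 hh
  simp only [stepGain, infoA_eq_A hj hh, moveProb_replace_of_eq hP, moveProb_of_P_eq hP, hidx]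

theorem mover_of_stepGain_replace_ne_zero (hne : stepGain i (G.replace β i b) β h ≠ 0) :
    G.P h = some i ∧ ∃ a, h ++ [a] ∈ G.H := by
  obtain ⟨a, ha, hterm⟩ := Finset.exists_ne_zero_of_sum_ne_zero hne
  refine ⟨?_, a, mem_A.1 ha⟩
  by_contra hP
  simp [moveProb_replace_of_ne hP] at hterm

theorem prodAlong_replace (pre t : List ℕ) :
    G.prodAlong (G.replace β i b) pre t =
      ((G.recordFrom i pre t).map fun p => b p.1 p.2).prod * G.prodAlongNot i β pre t := by
  induction t generalizing pre with
  | nil => simp [prodAlong, prodAlongNot, recordFrom]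
  | cons a t ih =>
    rw [prodAlong, prodAlongNot, recordFrom, ih]
    by_cases hP : G.P pre = some i
    · rw [moveProb_replace_of_eq hP, if_pos hP, if_pos hP, List.singleton_append, List.map_cons,
        List.prod_cons]
      ring
    · rw [moveProb_replace_of_ne hP, if_neg hP, if_neg hP, List.nil_append]
      ring

end Deviation

section PerfectRecall

theorem PerfectRecall.eq_of_prefix (hPR : G.PerfectRecall) (hj : j < G.m i)
    (hh : h ∈ G.Info i j) (hh' : h' ∈ G.Info i j) (hp : h <+: h') : h = h' := by
  obtain ⟨_ | ⟨a, t⟩, rfl⟩ := hp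
  · exact (List.append_nil h).symm
  · have hrec := hPR i j hj h hh _ hh'
    have hP : G.P h = some i := ((G.info_spec i j h hj).1 hh).2.1
    simp [recordFrom_append, recordFrom, hP] at hrec

theorem PerfectRecall.eq_of_prefix_of_prefix (hPR : G.PerfectRecall) (hj : j < G.m i)
    (hh : h ∈ G.Info i j) (hh' : h' ∈ G.Info i j) (hz : h <+: z) (hz' : h' <+: z) : h = h' :=
  (List.prefix_or_prefix_of_prefix hz hz').elim (hPR.eq_of_prefix hj hh hh')
    fun hp => (hPR.eq_of_prefix hj hh' hh hp).symm

theorem PerfectRecall.exists_reachProb_replace_eq_mul (hPR : G.PerfectRecall) (hj : j < G.m i)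
    (hin : ∀ h ∈ G.Info i j, r <+: h) (β : G.Profile) (b : ℕ → ℕ → ℝ) :
    ∃ c, ∀ h ∈ G.Info i j, reachProb (G.replace β i b) r h = c * counterfactualReach i β r h := by
  obtain ⟨h₀, hh₀⟩ := G.info_nonempty i j hj
  refine ⟨((G.recordFrom i r (h₀.drop r.length)).map fun p => b p.1 p.2).prod, fun h hh => ?_⟩
  have record_eq : G.recordFrom i r (h.drop r.length) = G.recordFrom i r (h₀.drop r.length) := by
    have hrec := hPR i j hj h hh h₀ hh₀
    obtain ⟨t, rfl⟩ := hin h hh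
    obtain ⟨t₀, rfl⟩ := hin h₀ hh₀
    simpa [recordFrom_append] using hrec
  rw [reachProb, prodAlong_replace, record_eq, counterfactualReach]

end PerfectRecall

section Beliefs

theorem PerfectRecall.prefix_dropLast_of_isSubgameRoot (hPR : G.PerfectRecall) (hj : j < G.m i)
    (hs : G.IsSubgameRoot s) (hh : h ∈ G.Info i j) (hh' : h' ∈ G.Info i j)
    (hsh : s <+: h.dropLast) : s <+: h'.dropLast := by
  obtain rfl | hne := eq_or_ne h []
  · rw [List.prefix_nil.1 hsh]
    exact List.nil_prefix
  have hsh' : s <+: h' :=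
    (hs.2 i j hj).resolve_right (fun hout => hout h hh (hsh.trans h.dropLast_prefix)) h' hh'
  obtain ⟨t, rfl⟩ := hsh'
  have ht : t ≠ [] := by
    rintro rfl
    rw [List.append_nil] at hh'
    have hlen := hsh.length_le
    rw [hPR.eq_of_prefix hj hh' hh (hsh.trans h.dropLast_prefix), List.length_dropLast] at hlen
    have := List.length_pos_iff.2 hne
    omega
  rw [List.dropLast_append_of_ne_nil ht]
  exact List.prefix_append s _

theorem PerfectRecall.sgDepthHist_eq (hPR : G.PerfectRecall) (hj : j < G.m i)
    (hh : h ∈ G.Info i j) (hh' : h' ∈ G.Info i j) : G.sgDepthHist h = G.sgDepthHist h' := by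
  unfold sgDepthHist
  congr 1
  refine Finset.filter_congr fun s _ => and_congr_right fun hs => ?_
  exact ⟨hPR.prefix_dropLast_of_isSubgameRoot hj hs hh hh',
    hPR.prefix_dropLast_of_isSubgameRoot hj hs hh' hh⟩

theorem IsSubgameRoot.exists_length_eq_sgDepthHist (hr : G.IsSubgameRoot r)
    (hrh : r <+: h.dropLast) :
    ∃ s, G.IsSubgameRoot s ∧ r <+: s ∧ s <+: h.dropLast ∧ s.length = G.sgDepthHist h := by
  have hmem : r ∈ G.H.filter fun s => G.IsSubgameRoot s ∧ s <+: h.dropLast :=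
    Finset.mem_filter.2 ⟨hr.1, hr, hrh⟩
  obtain ⟨s, hs_mem, hs_len⟩ := Finset.exists_mem_eq_sup _ ⟨r, hmem⟩ List.length
  obtain ⟨-, hs, hsh⟩ := Finset.mem_filter.1 hs_mem
  have hlen : r.length ≤ s.length := hs_len ▸ Finset.le_sup (f := List.length) hmem
  exact ⟨s, hs, List.prefix_of_prefix_length_le hrh hsh hlen, hsh, hs_len.symm⟩

theorem PerfectRecall.exists_counterfactualReach_eq_mul_yh (hPR : G.PerfectRecall)
    (hj : j < G.m i) (hr : G.IsSubgameRoot r) (hin : ∀ h ∈ G.Info i j, r <+: h)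
    (hrj : r ∉ G.Info i j) (β : G.Profile) :
    ∃ c, ∀ h ∈ G.Info i j, counterfactualReach i β r h = c * G.Yh i β h := by
  obtain ⟨h₀, hh₀⟩ := G.info_nonempty i j hj
  have hrh₀ : r <+: h₀.dropLast := by
    obtain ⟨t, rfl⟩ := hin h₀ hh₀
    have ht : t ≠ [] := by
      rintro rfl
      exact hrj (List.append_nil r ▸ hh₀)
    rw [List.dropLast_append_of_ne_nil ht]
    exact List.prefix_append r _
  obtain ⟨s, hs, hrs, hsh₀, hs_len⟩ := hr.exists_length_eq_sgDepthHist hrh₀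
  refine ⟨counterfactualReach i β r s, fun h hh => ?_⟩
  have hsh : s <+: h :=
    (hPR.prefix_dropLast_of_isSubgameRoot hj hs hh₀ hh hsh₀).trans h.dropLast_prefix
  have hYh : G.Yh i β h = counterfactualReach i β s h := by
    rw [Yh, hPR.sgDepthHist_eq hj hh hh₀, ← hs_len, ← List.prefix_iff_eq_take.1 hsh,
      counterfactualReach]
  rw [hYh, counterfactualReach_trans hrs hsh]

theorem PerfectRecall.counterfactualReach_eq_sum_mul_belief (hPR : G.PerfectRecall)
    (hμ : G.IsBelief μ) (hY : G.YConsistent β μ) (hj : j < G.m i) (hr : G.IsSubgameRoot r)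
    (hin : ∀ h ∈ G.Info i j, r <+: h) (hh : h ∈ G.Info i j) :
    counterfactualReach i β r h =
      (∑ h' ∈ G.Info i j, counterfactualReach i β r h') * μ i j h := by
  -- If `r` lies in the information set, then `Yh` refers to the subgame containing the move into
  -- `r` rather than to the one rooted at `r`; but then the set is `{r}`.
  by_cases hrj : r ∈ G.Info i j
  · have hInfo : G.Info i j = {r} := Finset.eq_singleton_iff_unique_mem.2
      ⟨hrj, fun x hx => (hPR.eq_of_prefix hj hrj hx (hin x hx)).symm⟩
    obtain rfl : h = r := by simpa [hInfo] using hh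
    have hμh : μ i j h = 1 := by simpa [hInfo] using (hμ i j hj).2
    rw [hInfo, Finset.sum_singleton, hμh, mul_one]
  · obtain ⟨c, hc⟩ := hPR.exists_counterfactualReach_eq_mul_yh hj hr hin hrj β
    rw [hc h hh, Finset.sum_congr rfl hc, ← Finset.mul_sum, mul_assoc, ← YInfo, hY i j hj h hh]

theorem PerfectRecall.reachProb_replace_eq_sum_mul_belief (hPR : G.PerfectRecall)
    (hμ : G.IsBelief μ) (hY : G.YConsistent β μ) (hj : j < G.m i) (hr : G.IsSubgameRoot r)
    (hin : ∀ h ∈ G.Info i j, r <+: h) (hh : h ∈ G.Info i j) :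
    reachProb (G.replace β i b) r h =
      (∑ h' ∈ G.Info i j, reachProb (G.replace β i b) r h') * μ i j h := by
  obtain ⟨c, hc⟩ := hPR.exists_reachProb_replace_eq_mul hj hin β b
  rw [hc h hh, Finset.sum_congr rfl hc, ← Finset.mul_sum, mul_assoc,
    ← hPR.counterfactualReach_eq_sum_mul_belief hμ hY hj hr hin hh]

end Beliefs

section ConditionalPayoff

theorem nuAux_append (w : List ℕ → ℝ) (pre t t' : List ℕ)
    (hpre : ∀ s, s <+: t → s ≠ t → pre ++ s ∉ G.Info i j) :
    G.nuAux i j β w pre (t ++ t') = G.nuAux i j β w (pre ++ t) t' := by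
  induction t generalizing pre with
  | nil => simp
  | cons a t ih =>
    have hnot : pre ∉ G.Info i j := by
      simpa using hpre [] List.nil_prefix (List.cons_ne_nil a t).symm
    rw [List.cons_append, nuAux, if_neg hnot, ih, ← List.append_cons]
    intro s hst hne
    simpa using hpre (a :: s) (by simpa using hst) (by simpa using hne)

theorem PerfectRecall.nu_eq (hPR : G.PerfectRecall) (hj : j < G.m i) (hh : h ∈ G.Info i j)
    (hz : h ++ [a] <+: z) : G.nu i j β μ z = μ i j h * reachProb β (h ++ [a]) z := by
  obtain ⟨t, rfl⟩ := hz
  rw [reachProb, List.drop_left, List.append_assoc, List.singleton_append, nu, nuAux_append,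
    List.nil_append, nuAux, if_pos hh]
  exact fun s hsh hne hs => hne (hPR.eq_of_prefix hj hs hh hsh)

theorem filter_mem_zset_eq_biUnion (hj : j < G.m i) (ha : a ∈ G.infoA i j) :
    G.Zset.filter (fun z => a ∈ z) =
      (G.Info i j).biUnion fun h => G.Zset.filter (fun z => h ++ [a] <+: z) := by
  ext z
  simp only [Finset.mem_filter, Finset.mem_biUnion]
  constructor
  · rintro ⟨hz, haz⟩
    obtain ⟨h, t, rfl⟩ := List.append_of_mem haz
    have hzH : (h ++ [a]) ++ t ∈ G.H := List.append_cons h a t ▸ (Finset.mem_filter.1 hz).1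
    exact ⟨h, mem_info_of_mem_infoA hj ha (mem_H_of_append_mem_H hzH), hz, t, by simp⟩
  · rintro ⟨h, -, hz, hp⟩
    exact ⟨hz, hp.subset (by simp)⟩

theorem PerfectRecall.uCond_eq_sum (hPR : G.PerfectRecall) (hj : j < G.m i)
    (ha : a ∈ G.infoA i j) :
    G.uCond i j a β μ = ∑ h ∈ G.Info i j, μ i j h * G.uExpFrom i β (h ++ [a]) := by
  rw [uCond, filter_mem_zset_eq_biUnion hj ha, Finset.sum_biUnion]
  · refine Finset.sum_congr rfl fun h hh => ?_
    rw [uExpFrom, Finset.mul_sum]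
    refine Finset.sum_congr rfl fun z hz => ?_
    rw [hPR.nu_eq hj hh (Finset.mem_filter.1 hz).2, reachProb, mul_left_comm]
  · intro h hh h' hh' hne
    refine Finset.disjoint_filter.2 fun z _ hz hz' => hne ?_
    exact hPR.eq_of_prefix_of_prefix hj hh hh' ((List.prefix_append h [a]).trans hz)
      ((List.prefix_append h' [a]).trans hz')

theorem PerfectRecall.sum_reachProb_mul_stepGain (hPR : G.PerfectRecall) (hμ : G.IsBelief μ)
    (hY : G.YConsistent β μ) (hj : j < G.m i) (hr : G.IsSubgameRoot r)
    (hin : ∀ h ∈ G.Info i j, r <+: h) :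
    ∑ h ∈ G.Info i j, reachProb (G.replace β i b) r h * stepGain i (G.replace β i b) β h =
      (∑ h ∈ G.Info i j, reachProb (G.replace β i b) r h) *
        ∑ a ∈ G.infoA i j, (b j a - β i j a) * G.uCond i j a β μ := by
  set R := ∑ h ∈ G.Info i j, reachProb (G.replace β i b) r h
  calc _ = ∑ h ∈ G.Info i j, R * μ i j h *
        ∑ a ∈ G.infoA i j, (b j a - β i j a) * G.uExpFrom i β (h ++ [a]) :=
        Finset.sum_congr rfl fun h hh => by
          rw [hPR.reachProb_replace_eq_sum_mul_belief hμ hY hj hr hin hh,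
            stepGain_replace_of_mem_info hj hh]
    _ = ∑ a ∈ G.infoA i j, ∑ h ∈ G.Info i j,
        R * ((b j a - β i j a) * (μ i j h * G.uExpFrom i β (h ++ [a]))) := by
        rw [Finset.sum_comm]
        refine Finset.sum_congr rfl fun h _ => ?_
        rw [Finset.mul_sum]
        exact Finset.sum_congr rfl fun a _ => by ring
    _ = R * ∑ a ∈ G.infoA i j, (b j a - β i j a) * G.uCond i j a β μ := by
        rw [Finset.mul_sum]
        refine Finset.sum_congr rfl fun a ha => ?_
        rw [hPR.uCond_eq_sum hj ha, Finset.mul_sum, Finset.mul_sum]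

theorem SubgameSemiSeqEq.sum_sub_mul_uCond_nonpos (hss : G.SubgameSemiSeqEq β μ)
    (hb : G.IsBehStrategy i b) (hj : j < G.m i) :
    ∑ a ∈ G.infoA i j, (b j a - β i j a) * G.uCond i j a β μ ≤ 0 := by
  obtain ⟨hβ, -, -, hopt⟩ := hss
  simp only [sub_mul, Finset.sum_sub_distrib, sub_nonpos]
  exact sum_mul_le_sum_mul_of_support_argmax (hb j hj).1 (hβ i j hj).2 (hb j hj).2 (hopt i j hj)

end ConditionalPayoff

end EFG

/-- A subgame perfect semi-sequential equilibrium yields a subgame perfect equilibrium in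
behavioral strategies. -/
theorem stmt16 (G : EFG) (hPR : G.PerfectRecall)
    (β : G.Profile) (μ : G.Belief) (hss : G.SubgameSemiSeqEq β μ) :
    G.IsSubgamePerfect β := by
  have ⟨hβ, hμ, hY, _⟩ := hss
  refine ⟨hβ, fun r hr i b hb => sub_nonpos.1 ?_⟩
  rw [EFG.uExpFrom_sub_eq_expectedTotal_stepGain hr.1, EFG.expectedTotal,
    hr.sum_filter_prefix_eq_sum_info fun h hne =>
      EFG.mover_of_stepGain_replace_ne_zero (right_ne_zero_of_mul hne)]
  refine Finset.sum_nonpos fun j hjin => ?_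
  obtain ⟨hj, hin⟩ : j < G.m i ∧ ∀ h ∈ G.Info i j, r <+: h := by simpa using hjin
  rw [hPR.sum_reachProb_mul_stepGain hμ hY hj hr hin]
  refine mul_nonpos_of_nonneg_of_nonpos ?_ (hss.sum_sub_mul_uCond_nonpos hb hj)
  exact Finset.sum_nonneg fun h hh =>
    EFG.reachProb_nonneg (hβ.replace hb) (hin h hh) ((G.info_spec i j h hj).1 hh).1
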